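/- arXiv:1406.1887 — 2 statements merged into one kernel-verified Lean document; each statement's English description precedes it below -/
import Mathlib

section
/- There exists n₀ such that for every even n ≥ n₀ and every positive integer m the following holds: if F ⊆ 2^[n] is 2-Sperner and the number of sets G ⊆ [n] with G ∉ F and |G| = n/2 is at least m, then |F| ≤ Σ(n,2) − 1.9·m/n. -/
/-- A family is 2-Sperner if it contains no chain of three of its members. -/
def TwoSperner {n : ℕ} (F : Finset (Finset (Fin n))) : Prop :=
  ∀ A ∈ F, ∀ B ∈ F, ∀ C ∈ F, ¬ (A ⊂ B ∧ B ⊂ C)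

def Sigma2 (n : ℕ) : ℕ := n.choose (n / 2) + n.choose (n / 2 + 1)

def levelFam (n k : ℕ) : Finset (Finset (Fin n)) :=
  Finset.univ.filter (fun S => S.card = k)

theorem aux_choose_mono (k i : ℕ) (hi : i + 1 ≤ k) (j : ℕ) (hj : j ≤ i) :
    (2 * k).choose j ≤ (2 * k).choose i := by
  induction i, hj using Nat.le_induction with
  | base => exact le_rfl
  | succ i hji ih =>
    exact (ih (by omega)).trans (Nat.choose_le_succ_of_lt_half_left (by omega))

theorem aux_choose_le (k : ℕ) (hk : 1 ≤ k) (j : ℕ) (hj : j ≠ k) (hj2 : j ≤ 2 * k) :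
    (2 * k).choose j ≤ (2 * k).choose (k + 1) := by
  have h1 : (2 * k).choose (k + 1) = (2 * k).choose (k - 1) :=
    Nat.choose_symm_of_eq_add (by omega)
  rw [h1]
  rcases lt_or_gt_of_ne hj with h | h
  · exact aux_choose_mono k (k - 1) (by omega) j (by omega)
  · rw [← Nat.choose_symm hj2]
    exact aux_choose_mono k (k - 1) (by omega) _ (by omega)

theorem aux_lym {n : ℕ} (F : Finset (Finset (Fin n))) (hF : TwoSperner F) :
    ∑ s ∈ F, ((n.choose s.card : ℝ))⁻¹ ≤ 2 := by
  classical
  have key := fun (G : Finset (Finset (Fin n)))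
      (h : IsAntichain (· ⊆ ·) (SetLike.coe G)) =>
    Finset.lubell_yamamoto_meshalkin_inequality_sum_inv_choose (𝕜 := ℝ) h
  simp only [Fintype.card_fin] at key
  rw [← Finset.sum_filter_add_sum_filter_not F (fun s => ∃ t ∈ F, t ⊂ s)]
  have h1 := key (F.filter (fun s => ∃ t ∈ F, t ⊂ s)) (by
    intro a ha b hb hab hs
    simp only [Finset.coe_filter, Set.mem_setOf_eq] at ha hb
    obtain ⟨ha, t, ht, hta⟩ := ha
    exact hF t ht a ha b hb.1 ⟨hta, hs.ssubset_of_ne hab⟩)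
  have h2 := key (F.filter (fun s => ¬ ∃ t ∈ F, t ⊂ s)) (by
    intro a ha b hb hab hs
    simp only [Finset.coe_filter, Set.mem_setOf_eq] at ha hb
    exact hb.2 ⟨a, ha.1, hs.ssubset_of_ne hab⟩)
  linarith

/-- For even `n`: if `F` is 2-Sperner and at least `m` sets of size `n/2` are missing from
`F`, then `|F| ≤ Σ(n,2) − 1.9·m/n`. -/
theorem two_sperner_stab_even_missing :
    ∃ n₀ : ℕ, ∀ n : ℕ, n₀ ≤ n → Even n → ∀ m : ℕ, 1 ≤ m →
      ∀ F : Finset (Finset (Fin n)), TwoSperner F →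
      m ≤ (levelFam n (n / 2) \ F).card →
      (F.card : ℝ) ≤ (Sigma2 n : ℝ) - 1.9 * m / n := by
  refine ⟨38, fun n hn he m _ F hF hm => ?_⟩
  classical
  obtain ⟨k, hk⟩ := he
  obtain rfl : n = 2 * k := by omega
  have hk2 : 2 * k / 2 = k := by omega
  rw [hk2] at hm
  unfold Sigma2
  rw [hk2]
  have hl := aux_lym F hF
  rw [← Finset.sum_filter_add_sum_filter_not F (fun s => s.card = k)] at hl
  have hcard := Finset.card_filter_add_card_filter_not (s := F) (fun s => s.card = k)
  have hlev : (levelFam (2 * k) k \ F).card + (F.filter (fun s => s.card = k)).card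
      = (2 * k).choose k := by
    have e1 : (levelFam (2 * k) k).card = (2 * k).choose k := by
      have : levelFam (2 * k) k = Finset.powersetCard k Finset.univ := by
        ext s; simp [levelFam]
      rw [this, Finset.card_powersetCard]; simp
    have e2 : F.filter (fun s => s.card = k) = levelFam (2 * k) k ∩ F := by
      ext s; simp [levelFam, and_comm]
    rw [e2, Finset.card_sdiff_add_card_inter, e1]
  have hab := Nat.choose_succ_right_eq (2 * k) k
  rw [show 2 * k - k = k by omega] at hab
  have ha0 : 0 < (2 * k).choose k := Nat.choose_pos (by omega)
  have hb0 : 0 < (2 * k).choose (k + 1) := Nat.choose_pos (by omega)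
  have s1 : ∑ s ∈ F with s.card = k, (((2 * k).choose s.card : ℝ))⁻¹
      = (F.filter (fun s => s.card = k)).card * (((2 * k).choose k : ℝ))⁻¹ := by
    rw [← nsmul_eq_mul]
    apply Finset.sum_eq_card_nsmul
    intro s hs
    rw [(Finset.mem_filter.1 hs).2]
  have s2 : (F.filter (fun s => ¬ s.card = k)).card * (((2 * k).choose (k + 1) : ℝ))⁻¹ ≤
      ∑ s ∈ F with ¬ s.card = k, (((2 * k).choose s.card : ℝ))⁻¹ := by
    rw [← nsmul_eq_mul]
    apply Finset.card_nsmul_le_sum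
    intro s hs
    have hs2 : s.card ≤ 2 * k := by simpa using Finset.card_le_univ s
    have hp : 0 < (2 * k).choose s.card := Nat.choose_pos hs2
    apply inv_anti₀ (by exact_mod_cast hp)
    exact_mod_cast aux_choose_le k (by omega) _ (Finset.mem_filter.1 hs).2 hs2
  rw [s1] at hl
  replace hl := (add_le_add_right s2 _).trans hl
  rw [← hcard]
  generalize (F.filter (fun s => s.card = k)).card = x at *
  generalize (F.filter (fun s => ¬ s.card = k)).card = y at *
  generalize (levelFam (2 * k) k \ F).card = M at *
  generalize (2 * k).choose k = a at *
  generalize (2 * k).choose (k + 1) = b at *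
  have hkR : (19 : ℝ) ≤ k := by exact_mod_cast (by omega : 19 ≤ k)
  have hmR : (m : ℝ) ≤ M := by exact_mod_cast hm
  have habR : (b : ℝ) * (k + 1) = a * k := by exact_mod_cast hab
  have hlevR : (M : ℝ) + x = a := by exact_mod_cast hlev
  have haR : (0 : ℝ) < a := by exact_mod_cast ha0
  have hbR : (0 : ℝ) < b := by exact_mod_cast hb0
  have hm0 : (0 : ℝ) ≤ m := Nat.cast_nonneg m
  have hb : (b : ℝ) = a * (k / (k + 1)) := by field_simp; linarith
  have hy : (y : ℝ) ≤ b + M * (k / (k + 1)) := by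
    have h3 : (y : ℝ) * (b : ℝ)⁻¹ ≤ 2 - x * (a : ℝ)⁻¹ := by linarith
    rw [← div_eq_mul_inv, div_le_iff₀ hbR] at h3
    refine h3.trans (le_of_eq ?_)
    rw [hb, ← hlevR]
    rw [← hlevR] at haR
    field_simp
    ring
  have h4 : (k : ℝ) / (k + 1) = 1 - 1 / (k + 1) := by field_simp; ring
  have h5 : 1.9 * (m : ℝ) / ((2 * k : ℕ) : ℝ) ≤ M * (1 / (k + 1)) := by
    push_cast
    rw [mul_one_div, div_le_div_iff₀ (by linarith) (by linarith)]
    nlinarith [mul_le_mul_of_nonneg_right hmR (by linarith : (0 : ℝ) ≤ 2 * k),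
      mul_le_mul_of_nonneg_left hkR hm0]
  rw [h4] at hy
  push_cast at h5 ⊢
  linarith
end

section
/- For every real ε ∈ (0,1) there exists n₀ such that for every n ≥ n₀ and every integer m with 1 ≤ m ≤ C(⌊(1−ε)n⌋, ⌊n/2⌋) the following holds: if F ⊆ 2^[n] is a 2-Sperner family such that |F \ S| ≥ m for every S ∈ Σ*(n,2), then |F| ≤ Σ(n,2) − g(⌈n/2⌉+1, m). -/
attribute [local instance] Classical.propDecidable

def SigmaStar (n : ℕ) : Set (Finset (Finset (Fin n))) :=
  { levelFam n (n / 2) ∪ levelFam n (n / 2 + 1),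
    levelFam n ((n + 1) / 2 - 1) ∪ levelFam n ((n + 1) / 2) }

/-- The generalized binomial coefficient `C(x,j) = x(x−1)⋯(x−j+1)/j!` for real `x`. -/
noncomputable def genChoose (x : ℝ) (j : ℕ) : ℝ :=
  (descPochhammer ℝ j).eval x / (Nat.factorial j)

/-- `x(l,m)`: the unique real `x ≥ l−1` with `C(x,l) = m` (for `m > 0`). -/
noncomputable def xval (l : ℕ) (m : ℝ) : ℝ :=
  if h : ∃ x : ℝ, (l : ℝ) - 1 ≤ x ∧ genChoose x l = m then h.choose else 0

/-- `g(l,m) = C(x(l,m), l−1) − C(x(l,m), l)`. -/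
noncomputable def gval (l : ℕ) (m : ℝ) : ℝ :=
  genChoose (xval l m) (l - 1) - genChoose (xval l m) l

open Finset
open scoped FinsetFamily

lemma gc_zero (x : ℝ) : genChoose x 0 = 1 := by simp [genChoose]

lemma gc_succ (x : ℝ) (j : ℕ) : genChoose x (j + 1) * (j + 1) = genChoose x j * (x - j) := by
  unfold genChoose
  rw [descPochhammer_succ_eval, Nat.factorial_succ]
  have : (Nat.factorial j : ℝ) ≠ 0 := by positivity
  push_cast
  field_simp

lemma gc_shift (x : ℝ) (j : ℕ) :
    genChoose (x + 1) (j + 1) * (j + 1) = genChoose x j * (x + 1) := by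
  unfold genChoose
  rw [descPochhammer_eval_eq_prod_range, descPochhammer_eval_eq_prod_range,
    Nat.factorial_succ, Finset.prod_range_succ']
  have : (Nat.factorial j : ℝ) ≠ 0 := by positivity
  have h2 : ∏ k ∈ Finset.range j, (x + 1 - ((k + 1 : ℕ) : ℝ)) = ∏ k ∈ Finset.range j, (x - k) := by
    apply Finset.prod_congr rfl
    intro k _
    push_cast
    ring
  rw [h2]
  push_cast
  field_simp
  ring

lemma gc_nat (n j : ℕ) : genChoose (n : ℝ) j = (n.choose j : ℝ) := by
  unfold genChoose
  rw [descPochhammer_eval_eq_descFactorial, Nat.descFactorial_eq_factorial_mul_choose]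
  have : (Nat.factorial j : ℝ) ≠ 0 := by positivity
  push_cast
  field_simp

lemma gc_nonneg {x : ℝ} {j : ℕ} (h : (j : ℝ) - 1 ≤ x) : 0 ≤ genChoose x j :=
  div_nonneg (descPochhammer_nonneg h) (by positivity)

lemma gc_pos {x : ℝ} {j : ℕ} (h : (j : ℝ) - 1 < x) : 0 < genChoose x j :=
  div_pos (descPochhammer_pos h) (by positivity)

lemma gc_mono {x y : ℝ} {j : ℕ} (h : (j : ℝ) - 1 ≤ x) (hxy : x ≤ y) :
    genChoose x j ≤ genChoose y j :=
  div_le_div_of_nonneg_right (monotoneOn_descPochhammer_eval j h (h.trans hxy) hxy) (by positivity)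

/-- Bernoulli type growth. -/
lemma gc_bern {x y : ℝ} {j : ℕ} (hx0 : 0 < x) (h : (j : ℝ) - 1 ≤ x) (hxy : x ≤ y) :
    genChoose x j * (x + j * (y - x)) ≤ genChoose y j * x := by
  induction j with
  | zero => simp [gc_zero]
  | succ j ih =>
    push_cast at h ⊢
    have ih := ih (by linarith)
    have e1 := gc_succ x j
    have e2 := gc_succ y j
    have hx : 0 ≤ genChoose x j := gc_nonneg (by linarith)
    have hy : 0 ≤ genChoose y j := gc_nonneg (by linarith)
    have hj : (0:ℝ) ≤ j := by positivity
    have hxj : 0 ≤ x - j := by linarith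
    have k1 : (x - j) * y ≤ (y - j) * x := by nlinarith
    have k2 : (x + (j+1) * (y - x)) * x ≤ (x + j * (y - x)) * y := by
      nlinarith [mul_nonneg hj (mul_nonneg (sub_nonneg.2 hxy) (sub_nonneg.2 hxy))]
    have hj1 : (0:ℝ) < (j + 1) * x := by positivity
    refine le_of_mul_le_mul_right ?_ hj1
    calc genChoose x (j + 1) * (x + (j + 1) * (y - x)) * ((j + 1) * x)
        = (genChoose x (j + 1) * (j+1)) * ((x + (j + 1) * (y - x)) * x) := by ring
      _ = genChoose x j * (x - j) * ((x + (j + 1) * (y - x)) * x) := by rw [e1]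
      _ ≤ genChoose x j * (x - j) * ((x + j * (y - x)) * y) := by gcongr
      _ = (genChoose x j * (x + j * (y - x))) * ((x - j) * y) := by ring
      _ ≤ (genChoose y j * x) * ((x - j) * y) := by
          apply mul_le_mul_of_nonneg_right ih
          apply mul_nonneg hxj; linarith
      _ ≤ (genChoose y j * x) * ((y - j) * x) := by gcongr
      _ = (genChoose y j * (y - j)) * x * x := by ring
      _ = genChoose y (j + 1) * x * ((j + 1) * x) := by rw [← e2]; ring

lemma gc_exists (l : ℕ) (hl : 1 ≤ l) (m : ℕ) : ∃ x : ℝ, (l : ℝ) - 1 ≤ x ∧ genChoose x l = m := by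
  have hc : Continuous (fun x : ℝ => genChoose x l) := by
    unfold genChoose
    exact continuous_descPochhammer_eval.div_const _
  obtain ⟨j, rfl⟩ : ∃ j, l = j + 1 := ⟨l - 1, by omega⟩
  have h0 : genChoose ((j : ℕ) : ℝ) (j + 1) = 0 := by
    rw [gc_nat]; simp
  have h1 : (m : ℝ) ≤ genChoose ((j + 1 + m : ℕ) : ℝ) (j + 1) := by
    rw [gc_nat]
    have : m + 1 ≤ (j + 1 + m).choose (j + 1) := by
      rw [show j + 1 + m = (m + 1) + j by ring]
      rw [← Nat.choose_symm (by omega)]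
      rw [show m + 1 + j - (j + 1) = m by omega]
      calc m + 1 = (m+1).choose m := by simp
        _ ≤ _ := Nat.choose_le_choose m (by omega)
    exact_mod_cast (by omega : m ≤ (j + 1 + m).choose (j + 1))
  have hab : ((j : ℕ) : ℝ) ≤ ((j + 1 + m : ℕ) : ℝ) := by exact_mod_cast (by omega)
  obtain ⟨x, hx, hx2⟩ := intermediate_value_Icc hab hc.continuousOn
    (show (m : ℝ) ∈ Set.Icc _ _ from ⟨by simp only [h0]; positivity, h1⟩)
  exact ⟨x, by push_cast; linarith [hx.1], hx2⟩

section Lovasz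
variable {α : Type*} [DecidableEq α] [Fintype α]

lemma sum_card_member (T : Finset (Finset α)) :
    ∑ v : α, #(T.memberSubfamily v) = ∑ A ∈ T, #A := by
  have h : ∀ v, #(T.memberSubfamily v) = ∑ A ∈ T, if v ∈ A then 1 else 0 := by
    intro v
    have h1 := card_memberSubfamily_add_card_nonMemberSubfamily v T
    have h2 := card_filter_add_card_filter_not (s := T) (fun s => v ∈ s)
    rw [← Finset.card_filter]
    have h3 : #(T.nonMemberSubfamily v) = #({s ∈ T | v ∉ s}) := rfl
    omega
  simp_rw [h]
  rw [Finset.sum_comm]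
  apply Finset.sum_congr rfl
  intro A _
  simp

lemma lovasz_step (r : ℕ) (x : ℝ) (T G : Finset (Finset α)) (hx : (r : ℝ) ≤ x)
    (hT : (T : Set (Finset α)).Sized (r + 2)) (hG : (G : Set (Finset α)).Sized (r + 1))
    (hTG : ∂ T ⊆ G) (hc : (#G : ℝ) ≤ genChoose x (r + 1))
    (H : ∀ v, (#(G.memberSubfamily v) : ℝ) < genChoose (x - 1) r →
      ((r : ℝ) + 1) * #(T.memberSubfamily v) ≤ (x - (r + 1)) * #(G.memberSubfamily v)) :
    ((r : ℝ) + 2) * #T ≤ (x - (r + 1)) * #G := by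
  have hv : ∀ v, ((r : ℝ) + 1) * #(T.memberSubfamily v) ≤
      (x - (r + 1)) * #(G.memberSubfamily v) := by
    intro v
    rcases lt_or_ge (#(G.memberSubfamily v) : ℝ) (genChoose (x - 1) r) with h | h
    · exact H v h
    have hsub : T.memberSubfamily v ⊆ G.nonMemberSubfamily v := by
      intro B hB
      rw [mem_memberSubfamily] at hB
      rw [mem_nonMemberSubfamily]
      refine ⟨hTG ?_, hB.2⟩
      rw [mem_shadow_iff_insert_mem]
      exact ⟨v, hB.2, hB.1⟩
    have h1 := card_le_card hsub
    have h2 := card_memberSubfamily_add_card_nonMemberSubfamily v G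
    have h3 : (#(T.memberSubfamily v) : ℝ) + #(G.memberSubfamily v) ≤ #G := by
      exact_mod_cast (by omega)
    have h4 := gc_shift (x - 1) r
    rw [sub_add_cancel] at h4
    have hr : (0 : ℝ) ≤ r := by positivity
    have h5 : genChoose (x - 1) r * x ≤ #(G.memberSubfamily v) * x := by
      apply mul_le_mul_of_nonneg_right h; linarith
    nlinarith
  have hs : ∑ v : α, ((r : ℝ) + 1) * #(T.memberSubfamily v) ≤
      ∑ v : α, (x - (r + 1)) * (#(G.memberSubfamily v) : ℝ) := sum_le_sum fun v _ => hv v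
  rw [← mul_sum, ← mul_sum, ← Nat.cast_sum, ← Nat.cast_sum, sum_card_member, sum_card_member,
    sum_congr rfl (fun A hA => hT (mem_coe.2 hA)), sum_congr rfl (fun A hA => hG (mem_coe.2 hA))] at hs
  simp only [sum_const, smul_eq_mul] at hs
  push_cast at hs
  have hr : (0 : ℝ) < r + 1 := by positivity
  refine le_of_mul_le_mul_left ?_ hr
  linarith

lemma sized_member {T : Finset (Finset α)} {r : ℕ} (hT : (T : Set (Finset α)).Sized (r + 1))
    (v : α) : (T.memberSubfamily v : Set (Finset α)).Sized r := by
  intro B hB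
  rw [mem_coe, mem_memberSubfamily] at hB
  have := hT (mem_coe.2 hB.1)
  rw [card_insert_of_notMem hB.2] at this
  omega

lemma shadow_member {T G : Finset (Finset α)} (hTG : ∂ T ⊆ G) (v : α) :
    ∂ (T.memberSubfamily v) ⊆ G.memberSubfamily v := by
  intro B hB
  rw [mem_shadow_iff_insert_mem] at hB
  obtain ⟨a, ha, hB⟩ := hB
  rw [mem_memberSubfamily] at hB ⊢
  have hvB : v ∉ B := fun h => hB.2 (mem_insert_of_mem h)
  have hav : a ≠ v := fun h => hB.2 (h ▸ mem_insert_self _ _)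
  refine ⟨hTG ?_, hvB⟩
  rw [mem_shadow_iff_insert_mem]
  refine ⟨a, ?_, ?_⟩
  · simp [hav, ha]
  · rw [insert_comm]; exact hB.1

lemma lovasz_clique (r : ℕ) : ∀ (x : ℝ) (T G : Finset (Finset α)), (r : ℝ) ≤ x →
    (T : Set (Finset α)).Sized (r + 2) → (G : Set (Finset α)).Sized (r + 1) →
    ∂ T ⊆ G → (#G : ℝ) ≤ genChoose x (r + 1) →
    ((r : ℝ) + 2) * #T ≤ (x - (r + 1)) * #G := by
  induction r with
  | zero =>
    intro x T G hx hT hG hTG hc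
    refine lovasz_step 0 x T G hx hT hG hTG hc ?_
    intro v hv
    rw [gc_zero] at hv
    have h0 : #(G.memberSubfamily v) = 0 := by
      have : #(G.memberSubfamily v) < 1 := by exact_mod_cast hv
      omega
    have hT0 : T.memberSubfamily v = ∅ := by
      rw [Finset.eq_empty_iff_forall_notMem]
      intro B hB
      have hs := sized_member hT v (mem_coe.2 hB)
      obtain ⟨a, ha⟩ : B.Nonempty := by rw [← card_pos]; omega
      have := shadow_member hTG v (erase_mem_shadow hB ha)
      rw [card_eq_zero.1 h0] at this
      simp at this
    rw [h0, hT0]; simp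
  | succ r ih =>
    intro x T G hx hT hG hTG hc
    refine lovasz_step (r + 1) x T G hx hT hG hTG hc ?_
    intro v hv
    push_cast at hx ⊢
    have := ih (x - 1) (T.memberSubfamily v) (G.memberSubfamily v) (by linarith)
      (sized_member hT v) (sized_member hG v) (shadow_member hTG v) hv.le
    linarith

/-- Ratio form of Lovász's version of Kruskal–Katona. -/
lemma lovasz_ratio (r : ℕ) (hr : 2 ≤ r) (y : ℝ) (T : Finset (Finset α)) (hy : (r : ℝ) - 1 ≤ y)
    (hT : (T : Set (Finset α)).Sized r) (hc : (#T : ℝ) ≤ genChoose y r) :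
    (r : ℝ) * #T ≤ (y - r + 1) * #(∂ T) := by
  obtain ⟨s, rfl⟩ : ∃ s, r = s + 2 := ⟨r - 2, by omega⟩
  push_cast at hy ⊢
  rcases le_or_gt (#(∂ T) : ℝ) (genChoose y (s + 1)) with h | h
  · have := lovasz_clique s y T (∂ T) (by linarith) hT hT.shadow subset_rfl h
    linarith
  · have e := gc_succ y (s + 1)
    push_cast at e
    have : genChoose y (s + 1) * (y - (s + 1)) ≤ #(∂ T) * (y - (s + 1)) :=
      mul_le_mul_of_nonneg_right h.le (by linarith)
    nlinarith

end Lovasz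
lemma gc_le_of {x y : ℝ} {l : ℕ} (hl : 2 ≤ l) (hy : (l : ℝ) - 1 ≤ y)
    (h : genChoose x l ≤ genChoose y l) (hpos : 0 < genChoose x l) : x ≤ y := by
  by_contra hlt
  push Not at hlt
  have hl' : (2 : ℝ) ≤ l := by exact_mod_cast hl
  have hb := gc_bern (by linarith) hy hlt.le
  have hyp : 0 < genChoose y l := lt_of_lt_of_le hpos h
  have h1 : 0 < genChoose y l * (l * (x - y)) := by
    apply mul_pos hyp; apply mul_pos <;> linarith
  have h2 : genChoose x l * y ≤ genChoose y l * y :=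
    mul_le_mul_of_nonneg_right h (by linarith)
  nlinarith

lemma h_mono {x y : ℝ} {l : ℕ} (hl : 4 ≤ l) (hx : (l : ℝ) - 1 ≤ x) (hxy : x ≤ y)
    (hy : y ≤ 2 * l - 4) :
    genChoose x (l - 1) * (2 * l - 1 - x) ≤ genChoose y (l - 1) * (2 * l - 1 - y) := by
  have hl' : (4 : ℝ) ≤ l := by exact_mod_cast hl
  have hc : ((l - 1 : ℕ) : ℝ) = l - 1 := by push_cast [show 1 ≤ l by omega]; ring
  have hx0 : 0 < x := by linarith
  have hb := gc_bern (j := l - 1) hx0 (by rw [hc]; linarith) hxy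
  rw [hc] at hb
  have hn : 0 ≤ genChoose x (l - 1) := gc_nonneg (by rw [hc]; linarith)
  have k : (2 * l - 1 - x) * x ≤ (x + (l - 1) * (y - x)) * (2 * l - 1 - y) := by
    have : (y - x) * x ≤ (y - x) * ((l - 1) * (2 * l - 1 - y)) := by
      apply mul_le_mul_of_nonneg_left _ (by linarith)
      nlinarith
    nlinarith
  refine le_of_mul_le_mul_right ?_ hx0
  calc genChoose x (l - 1) * (2 * l - 1 - x) * x
      = genChoose x (l - 1) * ((2 * l - 1 - x) * x) := by ring
    _ ≤ genChoose x (l - 1) * ((x + (l - 1) * (y - x)) * (2 * l - 1 - y)) := by gcongr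
    _ = (genChoose x (l - 1) * (x + (l - 1) * (y - x))) * (2 * l - 1 - y) := by ring
    _ ≤ (genChoose y (l - 1) * x) * (2 * l - 1 - y) := by
        apply mul_le_mul_of_nonneg_right hb; linarith
    _ = _ := by ring

lemma choose_double (l t : ℕ) (hl : 1 ≤ l) (ht : t + 3 ≤ 2 * l) :
    2 * t.choose (l - 1) ≤ (t + 1).choose (l - 1) := by
  obtain ⟨j, rfl⟩ : ∃ j, l = j + 1 := ⟨l - 1, by omega⟩
  simp only [Nat.add_sub_cancel]
  rcases j with _ | j
  · omega
  rw [Nat.choose_succ_succ']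
  have h := Nat.choose_succ_right_eq t j
  have : t.choose (j + 1) ≤ t.choose j := by
    have h3 : t.choose j * (t - j) ≤ t.choose j * (j + 1) := Nat.mul_le_mul_left _ (by omega)
    rw [← h] at h3
    exact Nat.le_of_mul_le_mul_right h3 (by omega)
  omega

lemma choose_big (l : ℕ) (hl : 8 ≤ l) :
    7 * (2 * l - 8).choose (l - 1) ≤ (2 * l - 4).choose l := by
  have h1 := choose_double l (2 * l - 8) (by omega) (by omega)
  have h2 := choose_double l (2 * l - 8 + 1) (by omega) (by omega)
  have h3 := choose_double l (2 * l - 8 + 2) (by omega) (by omega)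
  have h4 := choose_double l (2 * l - 8 + 3) (by omega) (by omega)
  rw [show 2 * l - 8 + 3 + 1 = 2 * l - 4 by omega] at h4
  simp only [Nat.add_assoc, Nat.reduceAdd] at h1 h2 h3 h4
  have h := Nat.choose_succ_right_eq (2 * l - 4) (l - 1)
  rw [show l - 1 + 1 = l by omega, show 2 * l - 4 - (l - 1) = l - 3 by omega] at h
  have h5 : (2 * l - 4).choose (l - 1) * l ≤ 2 * ((2 * l - 4).choose l * l) := by
    rw [h]
    have := Nat.mul_le_mul_left ((2 * l - 4).choose (l - 1)) (show l ≤ 2 * (l - 3) by omega)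
    linarith
  have h6 : (2 * l - 4).choose (l - 1) ≤ 2 * (2 * l - 4).choose l := by
    rw [← mul_assoc] at h5
    exact Nat.le_of_mul_le_mul_right h5 (by omega)
  omega

section Key
variable {n : ℕ}

lemma ratio2 {l r : ℕ} (hl : 4 ≤ l) (hr : r = l ∨ r = l + 1) (T : Finset (Finset (Fin n)))
    (hT : (T : Set (Finset (Fin n))).Sized r) (y : ℝ) (hy : (l : ℝ) ≤ y)
    (hc : (#T : ℝ) ≤ genChoose y l) :
    (l : ℝ) * #T ≤ (y - l + 1) * #(∂ T) := by
  rcases hr with rfl | rfl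
  · exact lovasz_ratio r (by omega) y T (by linarith) hT hc
  · have e := gc_shift y l
    have hn : 0 ≤ genChoose y l := gc_nonneg (by linarith)
    have hl0 : (0 : ℝ) < l + 1 := by positivity
    have h1 : genChoose y l ≤ genChoose (y + 1) (l + 1) := by
      refine le_of_mul_le_mul_right ?_ hl0
      rw [e]
      apply mul_le_mul_of_nonneg_left _ hn
      linarith
    have := lovasz_ratio (l + 1) (by omega) (y + 1) T (by push_cast; linarith) hT (hc.trans h1)
    push_cast at this
    have hp : (0 : ℝ) ≤ #T := by positivity
    linarith

lemma g_props {l m : ℕ} (hl : 10 ≤ l) (hm1 : 1 ≤ m) :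
    ∃ x : ℝ, (l : ℝ) ≤ x ∧ genChoose x l = m ∧
      gval l m * l = genChoose x (l - 1) * (2 * l - 1 - x) ∧
      gval l m * (x - l + 1) = m * (2 * l - 1 - x) := by
  have hl' : (10 : ℝ) ≤ l := by exact_mod_cast hl
  have hm' : (1 : ℝ) ≤ m := by exact_mod_cast hm1
  have hex := gc_exists l (by omega) m
  have hx : (l : ℝ) - 1 ≤ xval l m ∧ genChoose (xval l m) l = m := by
    unfold xval
    rw [dif_pos hex]
    exact hex.choose_spec
  obtain ⟨hx1, hx2⟩ := hx
  have hll : genChoose (l : ℝ) l = 1 := by rw [gc_nat]; simp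
  have e := gc_succ (xval l m) (l - 1)
  rw [show l - 1 + 1 = l by omega, hx2] at e
  have hc : ((l - 1 : ℕ) : ℝ) = l - 1 := by push_cast [show 1 ≤ l by omega]; ring
  rw [hc] at e
  refine ⟨xval l m, ?_, hx2, ?_, ?_⟩
  · exact gc_le_of (by omega) hx1 (by rw [hll, hx2]; exact hm') (by rw [hll]; norm_num)
  · unfold gval
    rw [hx2]
    linarith
  · unfold gval
    rw [hx2]
    linarith

lemma g_bound {l m : ℕ} (hl : 10 ≤ l) (hm1 : 1 ≤ m) (hm : m ≤ (2 * l - 8).choose l) :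
    0 ≤ gval l m ∧ gval l m * l ≤ (2 * l - 4).choose l := by
  obtain ⟨x, hx, hxm, hg1, hg2⟩ := g_props hl hm1
  have hl' : (10 : ℝ) ≤ l := by exact_mod_cast hl
  have hm' : (1 : ℝ) ≤ m := by exact_mod_cast hm1
  have hc8 : ((2 * l - 8 : ℕ) : ℝ) = 2 * l - 8 := by push_cast [show 8 ≤ 2 * l by omega]; ring
  have hx8 : x ≤ 2 * l - 8 := by
    refine gc_le_of (l := l) (by omega) (by linarith) ?_ (by rw [hxm]; linarith)
    rw [← hc8, gc_nat, hxm]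
    exact_mod_cast hm
  constructor
  · have : 0 ≤ gval l m * (x - l + 1) := by
      rw [hg2]; apply mul_nonneg <;> linarith
    exact nonneg_of_mul_nonneg_left this (by linarith)
  · rw [hg1]
    have h1 := h_mono (l := l) (by omega) (by linarith) hx8 (by linarith)
    refine h1.trans ?_
    rw [← hc8, gc_nat, hc8]
    have := choose_big l (by omega)
    have h2 : (7 : ℝ) * (2 * l - 8).choose (l - 1) ≤ (2 * l - 4).choose l := by exact_mod_cast this
    linarith

lemma key {l m r : ℕ} (hl : 10 ≤ l) (hnl : n + 2 ≤ 2 * l) (hm1 : 1 ≤ m)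
    (hm : m ≤ (2 * l - 8).choose l) (hr : r = l ∨ r = l + 1) (T : Finset (Finset (Fin n)))
    (hT : (T : Set (Finset (Fin n))).Sized r) :
    (#T : ℝ) + (min #T m : ℕ) / m * gval l m ≤ #(∂ T) := by
  obtain ⟨x, hx, hxm, hg1, hg2⟩ := g_props hl hm1
  obtain ⟨hg0, hgb⟩ := g_bound hl hm1 hm
  have hl' : (10 : ℝ) ≤ l := by exact_mod_cast hl
  have hm' : (1 : ℝ) ≤ m := by exact_mod_cast hm1
  rcases le_total #T m with htm | htm
  · rw [min_eq_left htm]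
    have h := ratio2 (by omega) hr T hT x hx (by rw [hxm]; exact_mod_cast htm)
    have hp : 0 < x - l + 1 := by linarith
    refine le_of_mul_le_mul_left ?_ hp
    refine le_trans (le_of_eq ?_) h
    have : (x - l + 1) * (#T + #T / m * gval l m) = (x - l + 1) * #T + #T / m * (gval l m * (x - l + 1)) := by
      ring
    rw [this, hg2]
    have : (m : ℝ) ≠ 0 := by linarith
    field_simp
    ring
  rw [min_eq_right htm, div_self (by linarith), one_mul]
  have htm' : (m : ℝ) ≤ #T := by exact_mod_cast htm
  rcases le_total #T ((2 * l - 4).choose l) with hw | hw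
  · obtain ⟨y, hy1, hyt, hgy1, hgy2⟩ := g_props (m := #T) hl (by omega)
    have h := ratio2 (by omega) hr T hT y hy1 hyt.ge
    have hc4 : ((2 * l - 4 : ℕ) : ℝ) = 2 * l - 4 := by push_cast [show 4 ≤ 2 * l by omega]; ring
    have hy4 : y ≤ 2 * l - 4 := by
      refine gc_le_of (l := l) (by omega) (by linarith) ?_ (by rw [hyt]; linarith)
      rw [← hc4, gc_nat, hyt]
      exact_mod_cast hw
    have hxy : x ≤ y := gc_le_of (l := l) (by omega) (by linarith) (by rw [hyt, hxm]; exact htm')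
      (by rw [hxm]; linarith)
    have hmon := h_mono (l := l) (by omega) (by linarith) hxy hy4
    rw [← hg1, ← hgy1] at hmon
    have hgg : gval l m ≤ gval l (#T : ℕ) := le_of_mul_le_mul_right hmon (by linarith)
    have hp : 0 < y - l + 1 := by linarith
    refine le_of_mul_le_mul_left ?_ hp
    refine le_trans ?_ h
    have : gval l m * (y - l + 1) ≤ gval l (#T : ℕ) * (y - l + 1) :=
      mul_le_mul_of_nonneg_right hgg hp.le
    rw [hgy2] at this
    linarith
  · have hw' : ((2 * l - 4).choose l : ℝ) ≤ #T := by exact_mod_cast hw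
    have h := card_mul_le_card_shadow_mul hT
    rw [Fintype.card_fin] at h
    have h2 : #T * l ≤ #(∂ T) * (l - 1) := by
      calc #T * l ≤ #T * r := Nat.mul_le_mul_left _ (by omega)
        _ ≤ _ := h
        _ ≤ _ := Nat.mul_le_mul_left _ (by omega)
    have hc : ((l - 1 : ℕ) : ℝ) = l - 1 := by push_cast [show 1 ≤ l by omega]; ring
    have h3 : (#T : ℝ) * l ≤ #(∂ T) * (l - 1) := by
      rw [← hc]; exact_mod_cast h2
    have h4 : gval l m * l ≤ #T := hgb.trans hw'
    have h5 : (#T : ℝ) ≤ #(∂ T) := by nlinarith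
    have h6 : (0:ℝ) < l := by linarith
    refine le_of_mul_le_mul_right ?_ h6
    nlinarith

end Key
section Comb
variable {n : ℕ}

abbrev Anti (A : Finset (Finset (Fin n))) : Prop :=
  IsAntichain (· ⊆ ·) (A : Set (Finset (Fin n)))

lemma ge_split (A : Finset (Finset (Fin n))) (r : ℕ) :
    #{S ∈ A | r ≤ #S} = #{S ∈ A | #S = r} + #{S ∈ A | r + 1 ≤ #S} := by
  rw [← card_union_of_disjoint]
  · congr 1
    ext S
    simp only [mem_filter, mem_union]
    constructor
    · rintro ⟨h1, h2⟩
      rcases h2.eq_or_lt with h | h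
      · exact Or.inl ⟨h1, h.symm⟩
      · exact Or.inr ⟨h1, h⟩
    · rintro (⟨h1, h2⟩ | ⟨h1, h2⟩)
      · exact ⟨h1, h2.ge⟩
      · exact ⟨h1, by omega⟩
  · rw [Finset.disjoint_left]
    intro S h1 h2
    simp only [mem_filter] at h1 h2
    omega

lemma falling_card_eq {A : Finset (Finset (Fin n))} (hA : Anti A) (r : ℕ) :
    #(falling r A) = #{S ∈ A | #S = r} + #(∂ (falling (r + 1) A)) := by
  rw [← slice_union_shadow_falling_succ,
    card_union_of_disjoint (IsAntichain.disjoint_slice_shadow_falling hA)]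
  rfl

lemma expand {T : Finset (Finset (Fin n))} {r : ℕ} (hT : (T : Set (Finset (Fin n))).Sized r)
    (hr : n + 1 ≤ 2 * r) : #T ≤ #(∂ T) := by
  have h := card_mul_le_card_shadow_mul hT
  rw [Fintype.card_fin] at h
  have : #T * r ≤ #(∂ T) * r := h.trans (Nat.mul_le_mul_left _ (by omega))
  exact Nat.le_of_mul_le_mul_right this (by omega)

lemma fall_card {A : Finset (Finset (Fin n))} (hA : Anti A) (d : ℕ) :
    ∀ r, n ≤ 2 * r + 1 → n + 1 ≤ r + d → #{S ∈ A | r ≤ #S} ≤ #(falling r A) := by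
  induction d with
  | zero =>
    intro r _ h
    rw [Finset.filter_false_of_mem]
    · simp
    · intro S _ hS
      have := card_le_univ S
      rw [Fintype.card_fin] at this
      omega
  | succ d ih =>
    intro r h1 h2
    rw [ge_split, falling_card_eq hA]
    have h3 := ih (r + 1) (by omega) (by omega)
    have h4 := expand (sized_falling (r + 1) A) (by omega)
    omega

lemma anti_level {A : Finset (Finset (Fin n))} (hA : Anti A) (j : ℕ) (hj : j ≤ n) :
    #{S ∈ A | #S = j} + #(∂ (falling (j + 1) A)) + #(∂ (falling (n - j + 1) Aᶜˢ)) ≤ n.choose j := by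
  have m1 : ∀ X ∈ ∂ (falling (j + 1) A), #X = j ∧ ∃ Z ∈ A, X ⊂ Z := by
    intro X hX
    rw [mem_shadow_iff_insert_mem] at hX
    obtain ⟨a, ha, hX⟩ := hX
    rw [mem_falling] at hX
    obtain ⟨⟨Z, hZ, hXZ⟩, hc⟩ := hX
    rw [card_insert_of_notMem ha] at hc
    exact ⟨by omega, Z, hZ, (ssubset_insert ha).trans_subset hXZ⟩
  have m2 : ∀ X ∈ (∂ (falling (n - j + 1) Aᶜˢ))ᶜˢ, #X = j ∧ ∃ Z ∈ A, Z ⊂ X := by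
    intro X hX
    rw [mem_compls, mem_shadow_iff_insert_mem] at hX
    obtain ⟨a, ha, hX⟩ := hX
    rw [mem_falling] at hX
    obtain ⟨⟨Z, hZ, hXZ⟩, hc⟩ := hX
    rw [card_insert_of_notMem ha, card_compl, Fintype.card_fin] at hc
    have hXn := card_le_univ X
    rw [Fintype.card_fin] at hXn
    refine ⟨by omega, Zᶜ, mem_compls.1 hZ, ?_⟩
    have := (ssubset_insert ha).trans_subset hXZ
    exact compl_lt_compl_iff_lt.1 (by rw [compl_compl]; exact this)
  rw [← card_compls (∂ (falling (n - j + 1) Aᶜˢ)), ← card_union_of_disjoint, ← card_union_of_disjoint]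
  · calc _ ≤ #(powersetCard j (univ : Finset (Fin n))) := by
          apply card_le_card
          intro X hX
          rw [mem_powersetCard]
          refine ⟨subset_univ _, ?_⟩
          rw [mem_union, mem_union] at hX
          rcases hX with (hX | hX) | hX
          · exact (mem_filter.1 hX).2
          · exact (m1 X hX).1
          · exact (m2 X hX).1
      _ = _ := by simp
  · rw [Finset.disjoint_left]
    intro X h1 h2
    obtain ⟨_, W, hW, hWX⟩ := m2 X h2
    rw [mem_union] at h1
    rcases h1 with h1 | h1
    · exact hA hW (mem_filter.1 h1).1 hWX.ne hWX.subset
    · obtain ⟨_, Z, hZ, hXZ⟩ := m1 X h1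
      exact hA hW hZ (hWX.trans hXZ).ne (hWX.trans hXZ).subset
  · rw [Finset.disjoint_left]
    intro X h1 h2
    obtain ⟨_, Z, hZ, hXZ⟩ := m1 X h2
    exact hA (mem_filter.1 h1).1 hZ hXZ.ne hXZ.subset

lemma anti_compls {A : Finset (Finset (Fin n))} (hA : Anti A) : Anti Aᶜˢ := by
  intro X hX Y hY hne hsub
  rw [mem_coe, mem_compls] at hX hY
  exact hA hY hX (fun h => hne (compl_injective h.symm)) (compl_le_compl hsub)

lemma compls_filter (A : Finset (Finset (Fin n))) (r : ℕ) :
    #{S ∈ Aᶜˢ | r ≤ #S} = #{S ∈ A | #S + r ≤ n} := by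
  rw [← card_compls]
  congr 1
  ext S
  have h := card_le_univ S
  rw [Fintype.card_fin] at h
  simp only [mem_compls, mem_filter, compl_compl, card_compl, Fintype.card_fin]
  constructor
  · rintro ⟨h1, h2⟩; exact ⟨h1, by omega⟩
  · rintro ⟨h1, h2⟩; exact ⟨h1, by omega⟩

lemma three_split (A : Finset (Finset (Fin n))) (j : ℕ) (hj : j ≤ n) :
    #A = #{S ∈ A | #S = j} + #{S ∈ A | j + 1 ≤ #S} + #{S ∈ Aᶜˢ | n - j + 1 ≤ #S} := by
  rw [← ge_split, compls_filter, ← card_filter_add_card_filter_not (s := A) (fun S => j ≤ #S)]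
  congr 2
  ext S
  simp only [mem_filter]
  constructor
  · rintro ⟨h1, h2⟩; exact ⟨h1, by omega⟩
  · rintro ⟨h1, h2⟩; exact ⟨h1, by omega⟩

variable {l : ℕ} {φ : ℕ → ℝ}

/-- Abstract key property. -/
def KeyProp (n l : ℕ) (φ : ℕ → ℝ) : Prop :=
  Monotone φ ∧ ∀ r, r = l ∨ r = l + 1 → ∀ T : Finset (Finset (Fin n)),
    (T : Set (Finset (Fin n))).Sized r → (#T : ℝ) + φ #T ≤ #(∂ T)

lemma up1 (hK : KeyProp n l φ) (hnl : n + 2 ≤ 2 * l) {A : Finset (Finset (Fin n))} (hA : Anti A)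
    {r : ℕ} (hr : r = l ∨ r = l + 1) :
    (#{S ∈ A | r ≤ #S} : ℝ) + φ #{S ∈ A | r ≤ #S} ≤ #(∂ (falling r A)) := by
  have h1 := fall_card hA (n + 1) r (by omega) (by omega)
  have h2 := hK.2 r hr _ (sized_falling r A)
  have h3 := hK.1 h1
  have h4 : (#{S ∈ A | r ≤ #S} : ℝ) ≤ #(falling r A) := by exact_mod_cast h1
  linarith

lemma up2 (hK : KeyProp n l φ) (hnl : n + 2 ≤ 2 * l) {A : Finset (Finset (Fin n))} (hA : Anti A)
    {r : ℕ} (hr : r + 1 = l) (hE : #(falling r A) ≤ #(∂ (falling r A))) :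
    (#{S ∈ A | r ≤ #S} : ℝ) + φ #{S ∈ A | l ≤ #S} ≤ #(∂ (falling r A)) := by
  have h1 := up1 hK hnl hA (Or.inl rfl)
  have h2 := falling_card_eq hA r
  have h3 := ge_split A r
  subst hr
  have h4 : (#(falling r A) : ℝ) = #{S ∈ A | #S = r} + #(∂ (falling (r + 1) A)) := by
    exact_mod_cast h2
  have h5 : (#{S ∈ A | r ≤ #S} : ℝ) = #{S ∈ A | #S = r} + #{S ∈ A | r + 1 ≤ #S} := by
    exact_mod_cast h3
  have h6 : (#(falling r A) : ℝ) ≤ #(∂ (falling r A)) := by exact_mod_cast hE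
  linarith

lemma odd_bound {k : ℕ} (hn : n = 2 * k + 1) (hl : l = k + 2) (hK : KeyProp n l φ)
    {A : Finset (Finset (Fin n))} (hA : Anti A) :
    (#A : ℝ) + φ #{S ∈ A | k + 2 ≤ #S} + φ #{S ∈ A | #S + (k + 2) ≤ n} ≤ n.choose k := by
  have h1 := anti_level hA k (by omega)
  have h2 := three_split A k (by omega)
  have h3 := up2 hK (by omega) hA (r := k + 1) (by omega)
    (expand (sized_falling _ _) (by omega))
  have h4 := up1 hK (by omega) (anti_compls hA) (r := n - k + 1) (Or.inl (by omega))
  have e : n - k + 1 = k + 2 := by omega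
  rw [e] at h1 h2 h4
  rw [← compls_filter]
  rw [hl] at h3
  have h1' : (#{S ∈ A | #S = k} : ℝ) + #(∂ (falling (k + 1) A)) + #(∂ (falling (k + 2) Aᶜˢ))
    ≤ n.choose k := by exact_mod_cast h1
  have h2' : (#A : ℝ) = #{S ∈ A | #S = k} + #{S ∈ A | k + 1 ≤ #S} + #{S ∈ Aᶜˢ | k + 2 ≤ #S} := by
    exact_mod_cast h2
  linarith

lemma even_bound1 {k : ℕ} (hn : n = 2 * k) (hl : l = k + 1) (hK : KeyProp n l φ)
    {A : Finset (Finset (Fin n))} (hA : Anti A) :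
    (#A : ℝ) + φ #{S ∈ A | k + 1 ≤ #S} + φ #{S ∈ A | #S + (k + 1) ≤ n} ≤ n.choose k := by
  have h1 := anti_level hA k (by omega)
  have h2 := three_split A k (by omega)
  have h3 := up1 hK (by omega) hA (r := k + 1) (Or.inl (by omega))
  have h4 := up1 hK (by omega) (anti_compls hA) (r := n - k + 1) (Or.inl (by omega))
  have e : n - k + 1 = k + 1 := by omega
  rw [e] at h1 h2 h4
  rw [← compls_filter]
  have h1' : (#{S ∈ A | #S = k} : ℝ) + #(∂ (falling (k + 1) A)) + #(∂ (falling (k + 1) Aᶜˢ))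
    ≤ n.choose k := by exact_mod_cast h1
  have h2' : (#A : ℝ) = #{S ∈ A | #S = k} + #{S ∈ A | k + 1 ≤ #S} + #{S ∈ Aᶜˢ | k + 1 ≤ #S} := by
    exact_mod_cast h2
  linarith

lemma half_expand {k : ℕ} (hk : 2 ≤ k) (T : Finset (Finset (Fin n)))
    (hT : (T : Set (Finset (Fin n))).Sized k) (h : 2 * #T ≤ (2 * k).choose k) : #T ≤ #(∂ T) := by
  have e : (2 * k).choose k = 2 * (2 * k - 1).choose k := by
    obtain ⟨j, rfl⟩ : ∃ j, k = j + 1 := ⟨k - 1, by omega⟩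
    rw [show 2 * (j + 1) = (2 * j + 1) + 1 by ring, Nat.choose_succ_succ', Nat.add_sub_cancel]
    have := Nat.choose_symm_half j
    omega
  have hc : ((2 * k - 1 : ℕ) : ℝ) = 2 * k - 1 := by push_cast [show 1 ≤ 2 * k by omega]; ring
  have hk' : (2 : ℝ) ≤ k := by exact_mod_cast hk
  have := lovasz_ratio k hk ((2 * k - 1 : ℕ) : ℝ) T (by rw [hc]; linarith) hT
    (by rw [gc_nat]; exact_mod_cast (by omega : #T ≤ (2 * k - 1).choose k))
  rw [hc] at this
  have h2 : (k : ℝ) * #T ≤ k * #(∂ T) := by linarith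
  exact_mod_cast le_of_mul_le_mul_left h2 (by linarith)

lemma even_bound2 {k : ℕ} (hk : 2 ≤ k) (hn : n = 2 * k) (hl : l = k + 1) (hK : KeyProp n l φ)
    {A : Finset (Finset (Fin n))} (hA : Anti A) (hh : 2 * #(falling k Aᶜˢ) ≤ (2 * k).choose k) :
    (#A : ℝ) + φ #{S ∈ A | k + 2 ≤ #S} + φ #{S ∈ A | #S + (k + 1) ≤ n} ≤ n.choose (k + 1) := by
  have h1 := anti_level hA (k + 1) (by omega)
  have h2 := three_split A (k + 1) (by omega)
  have h3 := up1 hK (by omega) hA (r := k + 2) (Or.inr (by omega))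
  have h4 := up2 hK (by omega) (anti_compls hA) (r := k) (by omega)
    (half_expand hk _ (sized_falling _ _) hh)
  have e : n - (k + 1) + 1 = k := by omega
  rw [e] at h1 h2
  rw [← compls_filter]
  rw [hl] at h4
  rw [show k + 1 + 1 = k + 2 from rfl] at h1 h2
  have h1' : (#{S ∈ A | #S = k + 1} : ℝ) + #(∂ (falling (k + 2) A)) + #(∂ (falling k Aᶜˢ))
    ≤ n.choose (k + 1) := by exact_mod_cast h1
  have h2' : (#A : ℝ) = #{S ∈ A | #S = k + 1} + #{S ∈ A | k + 2 ≤ #S} + #{S ∈ Aᶜˢ | k ≤ #S} := by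
    exact_mod_cast h2
  linarith

end Comb
section Final
variable {n : ℕ}

lemma four_card {R a b c d : Finset (Finset (Fin n))}
    (h : ∀ S ∈ R, S ∈ a ∨ S ∈ b ∨ S ∈ c ∨ S ∈ d) : #R ≤ #a + #b + #c + #d := by
  have h1 : R ⊆ ((a ∪ b) ∪ c) ∪ d := by
    intro S hS
    simp only [mem_union]
    rcases h S hS with h | h | h | h <;> simp [h]
  have h2 := card_le_card h1
  have h3 := card_union_le ((a ∪ b) ∪ c) d
  have h4 := card_union_le (a ∪ b) c
  have h5 := card_union_le a b
  omega

lemma phi_sum {m a b c d : ℕ} {g : ℝ} (hm : 1 ≤ m) (hg : 0 ≤ g) (h : m ≤ a + b + c + d) :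
    g ≤ (min a m : ℕ) / m * g + (min b m : ℕ) / m * g + (min c m : ℕ) / m * g
      + (min d m : ℕ) / m * g := by
  have h1 : m ≤ min a m + min b m + min c m + min d m := by omega
  have h2 : (m : ℝ) ≤ (min a m : ℕ) + (min b m : ℕ) + (min c m : ℕ) + (min d m : ℕ) := by
    exact_mod_cast h1
  have hm' : (0 : ℝ) < m := by exact_mod_cast hm
  have h3 : (1 : ℝ) ≤ ((min a m : ℕ) + (min b m : ℕ) + (min c m : ℕ) + (min d m : ℕ)) / m := by
    rw [le_div_iff₀ hm']; linarith
  calc g = 1 * g := by ring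
    _ ≤ ((min a m : ℕ) + (min b m : ℕ) + (min c m : ℕ) + (min d m : ℕ)) / m * g := by gcongr
    _ = _ := by ring

lemma two_sperner_split {F : Finset (Finset (Fin n))} (hF : TwoSperner F) :
    ∃ F1 F2 : Finset (Finset (Fin n)), Anti F1 ∧ Anti F2 ∧ #F = #F1 + #F2 ∧
      (∀ S ∈ F, S ∈ F1 ∨ S ∈ F2) ∧ (∀ X ∈ F2, ∀ Z ∈ F1, ¬ X ⊆ Z) := by
  refine ⟨F.filter (fun S => ∀ B ∈ F, ¬ B ⊂ S), F.filter (fun S => ¬ ∀ B ∈ F, ¬ B ⊂ S),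
    ?_, ?_, ?_, ?_, ?_⟩
  · intro X hX Y hY hne hsub
    rw [mem_coe, mem_filter] at hX hY
    exact hY.2 X hX.1 (ssubset_of_subset_of_ne hsub hne)
  · intro X hX Y hY hne hsub
    rw [mem_coe, mem_filter] at hX hY
    obtain ⟨hX1, hX2⟩ := hX
    push Not at hX2
    obtain ⟨W, hW, hWX⟩ := hX2
    exact hF W hW X hX1 Y hY.1 ⟨hWX, ssubset_of_subset_of_ne hsub hne⟩
  · exact (card_filter_add_card_filter_not _).symm
  · intro S hS
    simp only [mem_filter]
    by_cases h : ∀ B ∈ F, ¬ B ⊂ S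
    · exact Or.inl ⟨hS, h⟩
    · exact Or.inr ⟨hS, h⟩
  · intro X hX Z hZ hsub
    rw [mem_filter] at hX hZ
    obtain ⟨hX1, hX2⟩ := hX
    push Not at hX2
    obtain ⟨W, hW, hWX⟩ := hX2
    exact hZ.2 W hW (hWX.trans_subset hsub)

lemma dichotomy {k : ℕ} (hn : n = 2 * k) {F1 F2 : Finset (Finset (Fin n))}
    (h : ∀ X ∈ F2, ∀ Z ∈ F1, ¬ X ⊆ Z) :
    #(falling k F1) + #(falling k F2ᶜˢ) ≤ (2 * k).choose k := by
  rw [← card_compls (falling k F2ᶜˢ), ← card_union_of_disjoint]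
  · calc _ ≤ #(powersetCard k (univ : Finset (Fin n))) := by
          apply card_le_card
          intro X hX
          rw [mem_powersetCard]
          refine ⟨subset_univ _, ?_⟩
          rw [mem_union] at hX
          rcases hX with hX | hX
          · exact (mem_falling.1 hX).2
          · have := (mem_falling.1 (mem_compls.1 hX)).2
            have hXn := card_le_univ X
            rw [Fintype.card_fin] at hXn
            rw [card_compl, Fintype.card_fin] at this
            omega
      _ = _ := by simp [hn]
  · rw [Finset.disjoint_left]
    intro C h1 h2
    obtain ⟨⟨Z, hZ, hCZ⟩, _⟩ := mem_falling.1 h1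
    obtain ⟨⟨X, hX, hCX⟩, _⟩ := mem_falling.1 (mem_compls.1 h2)
    refine h Xᶜ (mem_compls.1 hX) Z hZ (subset_trans ?_ hCZ)
    exact compl_le_iff_compl_le.1 hCX

lemma mem_level {k : ℕ} {S : Finset (Fin n)} : S ∈ levelFam n k ↔ #S = k := by
  simp [levelFam]

lemma core {l m : ℕ} (hl : l = (n + 1) / 2 + 1) (hl10 : 10 ≤ l) (hm1 : 1 ≤ m)
    (hm : m ≤ (2 * l - 8).choose l) (F : Finset (Finset (Fin n))) (hF : TwoSperner F)
    (hS : ∀ S ∈ SigmaStar n, m ≤ (F \ S).card) :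
    (F.card : ℝ) ≤ (Sigma2 n : ℝ) - gval l (m : ℝ) := by
  have hnl : n + 2 ≤ 2 * l := by omega
  obtain ⟨hg0, -⟩ := g_bound hl10 hm1 hm
  have hm' : (0 : ℝ) < m := by exact_mod_cast hm1
  have hK : KeyProp n l (fun v => ((min v m : ℕ) : ℝ) / m * gval l m) := by
    constructor
    · intro a b hab
      have : ((min a m : ℕ) : ℝ) ≤ (min b m : ℕ) := by
        exact_mod_cast min_le_min_right m hab
      dsimp only
      gcongr
    · intro r hr T hT
      exact key hl10 hnl hm1 hm hr T hT
  obtain ⟨F1, F2, hA1, hA2, hcard, hmem, hsep⟩ := two_sperner_split hF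
  have hcard' : (#F : ℝ) = #F1 + #F2 := by exact_mod_cast hcard
  have hS1 := hS (levelFam n (n / 2) ∪ levelFam n (n / 2 + 1)) (by simp [SigmaStar])
  have hS2 := hS (levelFam n ((n + 1) / 2 - 1) ∪ levelFam n ((n + 1) / 2)) (by simp [SigmaStar])
  have hSig : (Sigma2 n : ℝ) = n.choose (n / 2) + n.choose (n / 2 + 1) := by
    simp [Sigma2]
  rw [hSig, hcard']
  rcases Nat.even_or_odd' n with ⟨k, hk | hk⟩
  · have e1 : n / 2 = k := by omega
    have e2 : (n + 1) / 2 = k := by omega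
    rw [e1] at hS1 ⊢
    rw [e2] at hS2
    have hd := dichotomy hk hsep
    rcases le_total #(falling k F1) #(falling k F2ᶜˢ) with hc | hc
    · have b1 := even_bound1 hk (by omega) hK hA2
      have b2 := even_bound2 (A := F1ᶜˢ) (by omega) hk (by omega) hK (anti_compls hA1)
        (by rw [compls_compls]; omega)
      rw [compls_filter, card_compls, ← compls_filter F1ᶜˢ, compls_compls] at b2
      have hsum := phi_sum hm1 hg0 (hS2.trans (four_card (a := {S ∈ F1 | #S + (k + 2) ≤ n})
        (b := {S ∈ F1 | k + 1 ≤ #S}) (c := {S ∈ F2 | k + 1 ≤ #S})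
        (d := {S ∈ F2 | #S + (k + 1) ≤ n}) (by
          intro S hSS
          rw [mem_sdiff, mem_union, mem_level, mem_level] at hSS
          have := hmem S hSS.1
          simp only [mem_filter]
          rcases this with h | h
          · rcases Nat.lt_or_ge k #S with h2 | h2
            · exact Or.inr (Or.inl ⟨h, h2⟩)
            · exact Or.inl ⟨h, by omega⟩
          · rcases Nat.lt_or_ge k #S with h2 | h2
            · exact Or.inr (Or.inr (Or.inl ⟨h, h2⟩))
            · exact Or.inr (Or.inr (Or.inr ⟨h, by omega⟩)))))
      linarith
    · have b1 := even_bound1 hk (by omega) hK hA1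
      have b2 := even_bound2 (by omega) hk (by omega) hK hA2 (by omega)
      have hsum := phi_sum hm1 hg0 (hS1.trans (four_card (a := {S ∈ F1 | k + 1 ≤ #S})
        (b := {S ∈ F1 | #S + (k + 1) ≤ n}) (c := {S ∈ F2 | k + 2 ≤ #S})
        (d := {S ∈ F2 | #S + (k + 1) ≤ n}) (by
          intro S hSS
          rw [mem_sdiff, mem_union, mem_level, mem_level] at hSS
          have := hmem S hSS.1
          simp only [mem_filter]
          rcases this with h | h
          · rcases Nat.lt_or_ge k #S with h2 | h2
            · exact Or.inl ⟨h, h2⟩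
            · exact Or.inr (Or.inl ⟨h, by omega⟩)
          · rcases Nat.lt_or_ge k #S with h2 | h2
            · exact Or.inr (Or.inr (Or.inl ⟨h, by omega⟩))
            · exact Or.inr (Or.inr (Or.inr ⟨h, by omega⟩)))))
      linarith
  · have e1 : n / 2 = k := by omega
    rw [e1] at hS1 ⊢
    have hsymm : n.choose (k + 1) = n.choose k := by
      rw [hk]; exact Nat.choose_symm_half k
    rw [hsymm]
    have b1 := odd_bound hk (by omega) hK hA1
    have b2 := odd_bound hk (by omega) hK hA2
    have hsum := phi_sum hm1 hg0 (hS1.trans (four_card (a := {S ∈ F1 | k + 2 ≤ #S})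
        (b := {S ∈ F1 | #S + (k + 2) ≤ n}) (c := {S ∈ F2 | k + 2 ≤ #S})
        (d := {S ∈ F2 | #S + (k + 2) ≤ n}) (by
          intro S hSS
          rw [mem_sdiff, mem_union, mem_level, mem_level] at hSS
          have := hmem S hSS.1
          simp only [mem_filter]
          rcases this with h | h
          · rcases Nat.lt_or_ge k #S with h2 | h2
            · exact Or.inl ⟨h, by omega⟩
            · exact Or.inr (Or.inl ⟨h, by omega⟩)
          · rcases Nat.lt_or_ge k #S with h2 | h2
            · exact Or.inr (Or.inr (Or.inl ⟨h, by omega⟩))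
            · exact Or.inr (Or.inr (Or.inr ⟨h, by omega⟩)))))
    linarith

end Final

/-- Stability for 2-Sperner families: if `F` is 2-Sperner, `1 ≤ m ≤ C(⌊(1−ε)n⌋,⌊n/2⌋)` and
`|F \ S| ≥ m` for every `S ∈ Σ*(n,2)`, then `|F| ≤ Σ(n,2) − g(⌈n/2⌉+1, m)`. -/
theorem two_sperner_stability (ε : ℝ) (hε : 0 < ε ∧ ε < 1) :
    ∃ n₀ : ℕ, ∀ n : ℕ, n₀ ≤ n → ∀ m : ℕ, 1 ≤ m →
      m ≤ Nat.choose ⌊(1 - ε) * (n : ℝ)⌋₊ (n / 2) →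
      ∀ F : Finset (Finset (Fin n)), TwoSperner F →
      (∀ S ∈ SigmaStar n, m ≤ (F \ S).card) →
      (F.card : ℝ) ≤ (Sigma2 n : ℝ) - gval ((n + 1) / 2 + 1) (m : ℝ) := by

  obtain ⟨hε0, hε1⟩ := hε
  refine ⟨⌈8 / ε⌉₊ + 20, ?_⟩
  intro n hn m hm1 hm F hF hS
  refine core rfl (by omega) hm1 (hm.trans ?_) F hF hS
  have hn8 : 8 ≤ ε * n := by
    have h1 : (8 / ε : ℝ) ≤ n := (Nat.le_ceil _).trans (by exact_mod_cast (by omega))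
    rw [div_le_iff₀ hε0] at h1
    linarith
  have hq : ⌊(1 - ε) * (n : ℝ)⌋₊ + 8 ≤ n := by
    have h0 : (0 : ℝ) ≤ (1 - ε) * n := mul_nonneg (by linarith) (by positivity)
    have h1 := Nat.floor_le h0
    have h2 : ((⌊(1 - ε) * (n : ℝ)⌋₊ + 8 : ℕ) : ℝ) ≤ n := by
      push_cast
      linarith
    exact_mod_cast h2
  generalize ⌊(1 - ε) * (n : ℝ)⌋₊ = q at hq
  have step : ∀ a b : ℕ, a.choose b ≤ (a + 1).choose (b + 1) := by
    intro a b
    rw [Nat.choose_succ_succ']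
    omega
  generalize hl : (n + 1) / 2 + 1 = l
  have h2 : (q + 2).choose l ≤ (2 * l - 8).choose l := Nat.choose_le_choose l (by omega)
  refine le_trans ?_ h2
  rcases (by omega : l = n / 2 + 1 ∨ l = n / 2 + 1 + 1) with h | h
  · rw [h]
    exact (step _ _).trans (Nat.choose_le_choose _ (by omega))
  · rw [h]
    exact (step _ _).trans (step _ _)
end
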